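/- Let P∩I denote the subcategory of objects of B that are both projective and injective, and assume the quotient category B/(P∩I) is connected. Let C be a pre-cluster tilting subcategory of B with P∩I ⊆ C and such that C contains an object not lying in P∩I. Then C is cluster tilting (i.e. C = C^⊥1 = ^⊥1C) if and only if the quotient category B/C is abelian. -/

import Mathlib

/-!
Write `D = C^⊥1 = ^⊥1C`; rigidity gives `C ⊆ D`, so `C` is cluster tilting iff `D ⊆ C`. A map is
called negligible if it factors through `C`.

If `D ⊆ C`, the cokernel of `f : X ⟶ Y` in `B/C` is represented by `Y ⟶ Z`, the pushout of a monic
left approximation `X ⟶ C₀` along `f`; the cokernel of `X ⟶ C₀` lies in `D`, hence in `C`, and this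
turns a weak cokernel into a cokernel. A syzygy argument shows that monomorphisms of `B/C` are
kernels of their cokernels (`exists_cok`), and duality gives kernels and normal epimorphisms
(`exists_ker`). These are assembled in `isAbelian_quotCat`.

Conversely, only the existence of kernels and cokernels in `B/C` is used. For `X` in `D`, the
pushout construction gives a sequence of weak cokernels `X → Y → Z → X'`. As the true cokernel of
`f` is a retract of `Z`, every `f` out of `X` is von Neumann regular in `B/C` (`regular`);
consequently a map out of an indecomposable `X` in `D`, not in `C`, is either a split monomorphism
or negligible. Applying regularity to the comparison map of cosyzygies `X' ⟶ I/X` shows that the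
minimal left approximation `C₀` of such an `X` is injective (`exists_thru_injective`,
`exists_leftApprox_PI`), and dually it
is projective. So negligible maps out of `X` even factor through `P∩I` (`splitMono_or_PI`), and
dually for maps into `X` (`splitEpi_or_PI`). Hence such indecomposables split off: if
there is one, the objects with no indecomposable summand in `D` outside `C`, together with the
objects all of whose indecomposable summands are in `P∩I` or in `D` outside `C`, disconnect
`B/(P∩I)` (`mem_of_rightPerp`).
-/

open CategoryTheory CategoryTheory.Limits

attribute [local instance] CategoryTheory.Abelian.hasFiniteBiproducts

universe v u

namespace ClusterPaperAb

variable {B : Type u} [Category.{v} B] [Abelian B]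

/-- `X` is a direct summand of `Z`. -/
def IsSummand (X Z : B) : Prop :=
  ∃ (s : X ⟶ Z) (r : Z ⟶ X), s ≫ r = 𝟙 X

/-- The category is Krull–Schmidt: every object is a finite direct sum of objects
whose endomorphism rings are local. -/
def IsKrullSchmidt : Prop :=
  ∀ X : B, ∃ (n : ℕ) (f : Fin n → B),
    Nonempty (X ≅ ⨁ f) ∧ ∀ i, IsLocalRing (End (f i))

/-- A class of objects is closed under isomorphisms. -/
def IsoClosed (P : B → Prop) : Prop := ∀ ⦃X Y : B⦄, (X ≅ Y) → P X → P Y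

/-- A class of objects is closed under finite direct sums. -/
def SumClosed (P : B → Prop) : Prop := ∀ ⦃X Y : B⦄, P X → P Y → P (X ⊞ Y)

/-- A class of objects is closed under direct summands. -/
def SummandClosed (P : B → Prop) : Prop := ∀ ⦃X Z : B⦄, IsSummand X Z → P Z → P X

/-- `0 → X → E → Y → 0` is a short exact sequence. -/
def IsSES {X E Y : B} (f : X ⟶ E) (g : E ⟶ Y) : Prop :=
  ∃ w : f ≫ g = 0, (ShortComplex.mk f g w).ShortExact

/-- A short exact sequence `0 → X → E → Y → 0` splits. -/
def Splits {X E Y : B} (f : X ⟶ E) (g : E ⟶ Y) : Prop :=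
  ∃ r : E ⟶ X, f ≫ r = 𝟙 X

/-- `C` is rigid: every short exact sequence with both end terms in `C` splits,
i.e. `Ext¹(C, C) = 0`. -/
def Rigid (C : B → Prop) : Prop :=
  ∀ ⦃X E Y : B⦄ (f : X ⟶ E) (g : E ⟶ Y), C X → C Y → IsSES f g → Splits f g

/-- `C^⊥1`: the objects `X` such that every short exact sequence
`0 → X → E → C → 0` with `C ∈ C` splits. -/
def rightPerp (C : B → Prop) : B → Prop := fun X =>
  ∀ ⦃Cb E : B⦄ (f : X ⟶ E) (g : E ⟶ Cb), C Cb → IsSES f g → Splits f g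

/-- `^⊥1 C`: the objects `X` such that every short exact sequence
`0 → C → E → X → 0` with `C ∈ C` splits. -/
def leftPerp (C : B → Prop) : B → Prop := fun X =>
  ∀ ⦃Cb E : B⦄ (f : Cb ⟶ E) (g : E ⟶ X), C Cb → IsSES f g → Splits f g

/-- `f : C₀ ⟶ X` is a right `C`-approximation of `X`. -/
def IsRightApprox (C : B → Prop) {C₀ X : B} (f : C₀ ⟶ X) : Prop :=
  ∀ ⦃C' : B⦄, C C' → ∀ g : C' ⟶ X, ∃ h : C' ⟶ C₀, h ≫ f = g

/-- `f : X ⟶ C₀` is a left `C`-approximation of `X`. -/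
def IsLeftApprox (C : B → Prop) {X C₀ : B} (f : X ⟶ C₀) : Prop :=
  ∀ ⦃C' : B⦄, C C' → ∀ g : X ⟶ C', ∃ h : C₀ ⟶ C', f ≫ h = g

/-- Every object admits an epic right `C`-approximation. -/
def StronglyContravariantlyFinite (C : B → Prop) : Prop :=
  ∀ X : B, ∃ (C₀ : B) (f : C₀ ⟶ X), C C₀ ∧ Epi f ∧ IsRightApprox C f

/-- Every object admits a monic left `C`-approximation. -/
def StronglyCovariantlyFinite (C : B → Prop) : Prop :=
  ∀ X : B, ∃ (C₀ : B) (f : X ⟶ C₀), C C₀ ∧ Mono f ∧ IsLeftApprox C f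

/-- A pre-cluster tilting subcategory of the abelian category `B`. -/
structure PreClusterTilting (C : B → Prop) : Prop where
  sumClosed : SumClosed C
  summandClosed : SummandClosed C
  rigid : Rigid C
  contra : StronglyContravariantlyFinite C
  cova : StronglyCovariantlyFinite C
  perp_eq : rightPerp C = leftPerp C

/-- `f` factors through an object of `D`. -/
def FactorsThru (D : B → Prop) {X Y : B} (f : X ⟶ Y) : Prop :=
  ∃ (Z : B) (g : X ⟶ Z) (h : Z ⟶ Y), D Z ∧ g ≫ h = f

/-- The hom relation identifying morphisms whose difference factors through `D`. -/
def quotRel (D : B → Prop) : HomRel B := fun {X Y} f g => FactorsThru D (f - g)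

/-- The additive quotient category `B/D`. -/
abbrev QuotCat (D : B → Prop) := CategoryTheory.Quotient (quotRel D)

/-- A category is abelian (as a property): it admits an abelian structure. -/
def IsAbelian (A : Type*) [Category A] : Prop := Nonempty (Abelian A)

/-- The subcategory of projective-injective objects. -/
def PI : B → Prop := fun X => Projective X ∧ Injective X

/-- A class of objects is closed under extensions. -/
def ExtClosed (P : B → Prop) : Prop :=
  ∀ ⦃X Y Z : B⦄ (f : X ⟶ Y) (g : Y ⟶ Z), IsSES f g → P X → P Z → P Y

/-- The quotient `B/(P ∩ I)` is connected: `B` is not the direct sum, modulo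
projective-injectives, of two subcategories each containing a non-projective-injective
object. -/
def ConnectedModPI : Prop :=
  ¬ ∃ (B₁ B₂ : B → Prop),
    (∀ X : B, PI X → B₁ X) ∧ (∀ X : B, PI X → B₂ X) ∧
    IsoClosed B₁ ∧ IsoClosed B₂ ∧ SummandClosed B₁ ∧ SummandClosed B₂ ∧
    ExtClosed B₁ ∧ ExtClosed B₂ ∧
    (∃ X, B₁ X ∧ ¬ PI X) ∧ (∃ X, B₂ X ∧ ¬ PI X) ∧
    (∀ X : B, ∃ (A A' : B), B₁ A ∧ B₂ A' ∧ Nonempty (X ≅ A ⊞ A')) ∧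
    (∀ ⦃X Y : B⦄, B₁ X → B₂ Y → ∀ f : X ⟶ Y, FactorsThru PI f) ∧
    (∀ ⦃X Y : B⦄, B₂ X → B₁ Y → ∀ f : X ⟶ Y, FactorsThru PI f)

set_option linter.unusedSectionVars false

/-! ### Morphisms factoring through a class of objects -/

section Ideal

variable {C : B → Prop}

lemma FactorsThru.congr {X Y : B} {f g : X ⟶ Y} (h : FactorsThru C f) (e : f = g) :
    FactorsThru C g := e ▸ h

lemma FactorsThru.precomp {X Y Z : B} {f : Y ⟶ Z} (h : FactorsThru C f) (g : X ⟶ Y) :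
    FactorsThru C (g ≫ f) := by
  obtain ⟨W, a, b, hW, rfl⟩ := h
  exact ⟨W, g ≫ a, b, hW, by simp⟩

lemma FactorsThru.postcomp {X Y Z : B} {f : X ⟶ Y} (h : FactorsThru C f) (g : Y ⟶ Z) :
    FactorsThru C (f ≫ g) := by
  obtain ⟨W, a, b, hW, rfl⟩ := h
  exact ⟨W, a, b ≫ g, hW, by simp⟩

lemma FactorsThru.neg {X Y : B} {f : X ⟶ Y} (h : FactorsThru C f) : FactorsThru C (-f) := by
  obtain ⟨W, a, b, hW, rfl⟩ := h
  exact ⟨W, a, -b, hW, by simp⟩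

lemma FactorsThru.add (hs : SumClosed C) {X Y : B} {f g : X ⟶ Y} (h : FactorsThru C f)
    (h' : FactorsThru C g) : FactorsThru C (f + g) := by
  obtain ⟨W, a, b, hW, rfl⟩ := h
  obtain ⟨W', a', b', hW', rfl⟩ := h'
  exact ⟨W ⊞ W', biprod.lift a a', biprod.desc b b', hs hW hW', by simp⟩

lemma FactorsThru.sub (hs : SumClosed C) {X Y : B} {f g : X ⟶ Y} (h : FactorsThru C f)
    (h' : FactorsThru C g) : FactorsThru C (f - g) :=
  (h.add hs h'.neg).congr (by abel)

lemma FactorsThru.op {X Y : B} {f : X ⟶ Y} (h : FactorsThru C f) :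
    FactorsThru (B := Bᵒᵖ) (fun X => C X.unop) f.op := by
  obtain ⟨W, a, b, hW, rfl⟩ := h
  exact ⟨Opposite.op W, b.op, a.op, hW, rfl⟩

lemma FactorsThru.unop {X Y : Bᵒᵖ} {f : X ⟶ Y}
    (h : FactorsThru (B := Bᵒᵖ) (fun X => C X.unop) f) : FactorsThru C f.unop := by
  obtain ⟨W, a, b, hW, rfl⟩ := h
  exact ⟨W.unop, b.unop, a.unop, hW, rfl⟩

lemma SummandClosed.iso (hC : SummandClosed C) {X Y : B} (e : X ≅ Y) (h : C X) : C Y :=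
  hC ⟨e.inv, e.hom, by simp⟩ h

end Ideal

/-! ### Short exact sequences, lifting and extension -/

section SES

variable {X E Y : B} {f : X ⟶ E} {g : E ⟶ Y}

lemma IsSES.w (h : IsSES f g) : f ≫ g = 0 := h.1

lemma IsSES.mono (h : IsSES f g) : Mono f := h.2.mono_f

lemma IsSES.epi (h : IsSES f g) : Epi g := h.2.epi_g

lemma IsSES.op (h : IsSES f g) : IsSES g.op f.op := by
  obtain ⟨w, h⟩ := h
  exact ⟨by rw [← op_comp, w, op_zero], h.op⟩

lemma IsSES.unop {X E Y : Bᵒᵖ} {f : X ⟶ E} {g : E ⟶ Y} (h : IsSES f g) :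
    IsSES g.unop f.unop := by
  obtain ⟨w, h⟩ := h
  exact ⟨by rw [← unop_comp, w, unop_zero], h.unop⟩

lemma IsSES.lift (h : IsSES f g) {W : B} (k : W ⟶ E) (hk : k ≫ g = 0) : ∃ l : W ⟶ X, l ≫ f = k := by
  obtain ⟨w, h⟩ := h
  have := h.mono_f
  exact ⟨h.exact.lift k hk, h.exact.lift_f k hk⟩

lemma IsSES.desc (h : IsSES f g) {W : B} (k : E ⟶ W) (hk : f ≫ k = 0) : ∃ l : Y ⟶ W, g ≫ l = k := by
  obtain ⟨w, h⟩ := h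
  have := h.epi_g
  exact ⟨h.exact.desc k hk, h.exact.g_desc k hk⟩

lemma isSES_of_cokernel (w : f ≫ g = 0) [Mono f] [Epi g]
    (h : ∀ ⦃W : B⦄ (k : E ⟶ W), f ≫ k = 0 → ∃ l : Y ⟶ W, g ≫ l = k) : IsSES f g := by
  refine ⟨w, ?_⟩
  have hex : (ShortComplex.mk f g w).Exact := by
    apply ShortComplex.exact_of_g_is_cokernel
    exact CokernelCofork.IsColimit.ofπ _ _ (fun k hk => (h k hk).choose)
      (fun k hk => (h k hk).choose_spec)
      (fun k hk m hm => by
        rw [← cancel_epi g]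
        exact hm.trans (h k hk).choose_spec.symm)
  exact { exact := hex, mono_f := ‹_›, epi_g := ‹_› }

lemma isSES_cokernel {X E : B} (f : X ⟶ E) [Mono f] : IsSES f (cokernel.π f) :=
  isSES_of_cokernel (cokernel.condition f)
    (fun _ k hk => ⟨cokernel.desc f k hk, cokernel.π_desc f k hk⟩)

lemma isSES_kernel {E Y : B} (g : E ⟶ Y) [Epi g] : IsSES (kernel.ι g) g := by
  refine isSES_of_cokernel (kernel.condition g) (fun W k hk => ?_)
  exact ⟨Abelian.epiDesc g k hk, Abelian.comp_epiDesc g k hk⟩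

/-- Pushout of a short exact sequence along a morphism out of its left term. -/
lemma IsSES.exists_pushout (h : IsSES f g) {V : B} (a : X ⟶ V) :
    ∃ (Z : B) (j : V ⟶ Z) (k : E ⟶ Z) (p : Z ⟶ Y), IsSES j p ∧ a ≫ j = f ≫ k ∧ k ≫ p = g ∧
      ∀ ⦃W : B⦄ (u : V ⟶ W) (w : E ⟶ W), a ≫ u = f ≫ w → ∃ d : Z ⟶ W, j ≫ d = u ∧ k ≫ d = w := by
  have := h.mono
  have := h.epi
  have e0 : a ≫ (0 : V ⟶ Y) = f ≫ g := by rw [h.w, comp_zero]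
  have hl : pushout.inl a f ≫ pushout.desc 0 g e0 = 0 := pushout.inl_desc _ _ _
  have hp : pushout.inr a f ≫ pushout.desc 0 g e0 = g := pushout.inr_desc _ _ _
  have : Epi (pushout.desc 0 g e0) := by
    have : Epi (pushout.inr a f ≫ pushout.desc 0 g e0) := by rwa [hp]
    exact epi_of_epi (pushout.inr a f) _
  refine ⟨_, pushout.inl a f, pushout.inr a f, pushout.desc 0 g e0, ?_,
    pushout.condition, hp, fun W u w e => ⟨pushout.desc u w e, pushout.inl_desc _ _ _,
      pushout.inr_desc _ _ _⟩⟩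
  refine isSES_of_cokernel hl (fun W k hk => ?_)
  have h0 : f ≫ pushout.inr a f ≫ k = 0 := by
    rw [← pushout.condition_assoc, hk, comp_zero]
  obtain ⟨d, hd⟩ := h.desc _ h0
  refine ⟨d, pushout.hom_ext ?_ ?_⟩
  · rw [reassoc_of% hl, hk, zero_comp]
  · rw [reassoc_of% hp, hd]

/-- A short exact sequence which splits on the left splits on the right. -/
lemma IsSES.section_of_splits (h : IsSES f g) (hs : Splits f g) : ∃ s : Y ⟶ E, s ≫ g = 𝟙 Y := by
  obtain ⟨r, hr⟩ := hs
  obtain ⟨s, hs⟩ := h.desc (𝟙 E - r ≫ f) (by simp [Preadditive.comp_sub, reassoc_of% hr])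
  have := h.epi
  refine ⟨s, ?_⟩
  rw [← cancel_epi g, reassoc_of% hs]
  simp [Preadditive.sub_comp, h.w]

lemma IsSES.splits_of_section (h : IsSES f g) {s : Y ⟶ E} (hs : s ≫ g = 𝟙 Y) : Splits f g := by
  obtain ⟨r, hr⟩ := h.lift (𝟙 E - g ≫ s) (by simp [Preadditive.sub_comp, hs])
  have := h.mono
  refine ⟨r, ?_⟩
  rw [← cancel_mono f, Category.assoc, hr]
  simp [Preadditive.comp_sub, reassoc_of% h.w]

lemma IsSES.extend {C : B → Prop} (h : IsSES f g) (hY : leftPerp C Y) {T : B} (hT : C T)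
    (t : X ⟶ T) : ∃ t' : E ⟶ T, f ≫ t' = t := by
  obtain ⟨Z, j, k, p, hjp, e, -, -⟩ := h.exists_pushout t
  obtain ⟨r, hr⟩ := hY j p hT hjp
  exact ⟨k ≫ r, by rw [← reassoc_of% e, hr, Category.comp_id]⟩

lemma leftPerp_op {C : B → Prop} {X : B} (h : rightPerp C X) :
    leftPerp (B := Bᵒᵖ) (fun X => C X.unop) (Opposite.op X) := by
  intro T E f g hT hfg
  obtain ⟨s, hs⟩ := hfg.unop.section_of_splits (h _ _ hT hfg.unop)
  exact ⟨s.op, Quiver.Hom.unop_inj hs⟩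

lemma rightPerp_op {C : B → Prop} {X : B} (h : leftPerp C X) :
    rightPerp (B := Bᵒᵖ) (fun X => C X.unop) (Opposite.op X) := by
  intro T E f g hT hfg
  obtain ⟨s, hs⟩ := hfg.unop.section_of_splits (h _ _ hT hfg.unop)
  exact ⟨s.op, Quiver.Hom.unop_inj hs⟩

lemma rightPerp_of_op {C : B → Prop} {X : B}
    (h : leftPerp (B := Bᵒᵖ) (fun X => C X.unop) (Opposite.op X)) : rightPerp C X := by
  intro T E f g hT hfg
  obtain ⟨s, hs⟩ := hfg.op.section_of_splits (h _ _ hT hfg.op)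
  exact ⟨s.unop, Quiver.Hom.op_inj hs⟩

lemma leftPerp_of_op {C : B → Prop} {X : B}
    (h : rightPerp (B := Bᵒᵖ) (fun X => C X.unop) (Opposite.op X)) : leftPerp C X := by
  intro T E f g hT hfg
  obtain ⟨s, hs⟩ := hfg.op.section_of_splits (h _ _ hT hfg.op)
  exact ⟨s.unop, Quiver.Hom.op_inj hs⟩

lemma IsSES.liftC {C : B → Prop} (h : IsSES f g) (hX : rightPerp C X) {T : B} (hT : C T)
    (t : T ⟶ Y) : ∃ t' : T ⟶ E, t' ≫ g = t := by
  obtain ⟨t', ht'⟩ := h.op.extend (leftPerp_op hX) (T := Opposite.op T) hT t.op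
  exact ⟨t'.unop, Quiver.Hom.op_inj ht'⟩

/-- Pulling back: if `β` extends the short exact sequence `(f, g)` to a morphism of short exact
sequences which is the identity on the left term, the right-hand square is a pullback. -/
lemma IsSES.pullback_lift (h : IsSES f g) {E' Y' : B} {f' : X ⟶ E'} {g' : E' ⟶ Y'}
    (h' : IsSES f' g') {u : E ⟶ E'} {w : Y ⟶ Y'} (hu : f ≫ u = f') (hw : u ≫ g' = g ≫ w)
    {T : B} (l : T ⟶ E') (t : T ⟶ Y) (e : l ≫ g' = t ≫ w) :
    ∃ x : T ⟶ E, x ≫ g = t ∧ x ≫ u = l := by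
  have := h.epi
  have := h'.mono
  have hy := isSES_kernel (pullback.snd g t)
  obtain ⟨s, hs⟩ := h'.lift (pullback.fst g t ≫ u - pullback.snd g t ≫ l) (by
    simp [Preadditive.sub_comp, hw, e, pullback.condition_assoc])
  have hN0 : kernel.ι (pullback.snd g t) ≫ (pullback.fst g t - s ≫ f) ≫ g = 0 := by
    simp [Preadditive.sub_comp, h.w, pullback.condition]
  obtain ⟨m, hm⟩ := h.lift (kernel.ι (pullback.snd g t) ≫ (pullback.fst g t - s ≫ f))
    (by simpa using hN0)
  have hxu : (pullback.fst g t - s ≫ f) ≫ u = pullback.snd g t ≫ l := by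
    rw [Preadditive.sub_comp, Category.assoc, hu, hs]; abel
  have hm0 : m = 0 := by
    rw [← cancel_mono f', ← hu, reassoc_of% hm, hxu]
    simp
  obtain ⟨x, hx⟩ := hy.desc (pullback.fst g t - s ≫ f) (by rw [← hm, hm0, zero_comp])
  refine ⟨x, ?_, ?_⟩
  · rw [← cancel_epi (pullback.snd g t), reassoc_of% hx]
    simp [Preadditive.sub_comp, h.w, pullback.condition]
  · rw [← cancel_epi (pullback.snd g t), reassoc_of% hx, hxu]

end SES

/-! ### Passing to the opposite category -/

section Opp

lemma IsSummand.unop {X Y : Bᵒᵖ} (h : IsSummand X Y) : IsSummand X.unop Y.unop := by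
  obtain ⟨s, r, h⟩ := h
  exact ⟨r.unop, s.unop, by rw [← unop_comp, h]; rfl⟩

lemma SummandClosed.op {C : B → Prop} (hC : SummandClosed C) :
    SummandClosed (B := Bᵒᵖ) (fun X => C X.unop) :=
  fun _ _ h hZ => hC h.unop hZ

lemma sumClosed_op {C : B → Prop} (hs : SumClosed C) (hC : SummandClosed C) :
    SumClosed (B := Bᵒᵖ) (fun X => C X.unop) := by
  intro X Y hX hY
  refine hC ⟨biprod.lift (biprod.inl : X ⟶ X ⊞ Y).unop (biprod.inr : Y ⟶ X ⊞ Y).unop,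
    biprod.desc (biprod.fst : X ⊞ Y ⟶ X).unop (biprod.snd : X ⊞ Y ⟶ Y).unop, ?_⟩ (hs hX hY)
  rw [biprod.lift_desc, ← unop_comp, ← unop_comp, ← unop_add, biprod.total]
  rfl

lemma PreClusterTilting.op {C : B → Prop} (hC : PreClusterTilting C) :
    PreClusterTilting (B := Bᵒᵖ) (fun X => C X.unop) where
  sumClosed := sumClosed_op hC.sumClosed hC.summandClosed
  summandClosed := hC.summandClosed.op
  rigid := by
    intro X E Y f g hX hY h
    obtain ⟨s, hs⟩ := h.unop.section_of_splits (hC.rigid _ _ hY hX h.unop)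
    exact ⟨s.op, Quiver.Hom.unop_inj hs⟩
  contra := by
    intro X
    obtain ⟨C₀, f, h₀, hf, ha⟩ := hC.cova X.unop
    refine ⟨Opposite.op C₀, f.op, h₀, inferInstance, fun C' hC' g => ?_⟩
    obtain ⟨h, hh⟩ := ha hC' g.unop
    exact ⟨h.op, Quiver.Hom.unop_inj hh⟩
  cova := by
    intro X
    obtain ⟨C₀, f, h₀, hf, ha⟩ := hC.contra X.unop
    refine ⟨Opposite.op C₀, f.op, h₀, inferInstance, fun C' hC' g => ?_⟩
    obtain ⟨h, hh⟩ := ha hC' g.unop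
    exact ⟨h.op, Quiver.Hom.unop_inj hh⟩
  perp_eq := by
    funext X
    have e := congrFun hC.perp_eq X.unop
    exact propext ⟨fun h => leftPerp_op (e ▸ leftPerp_of_op h),
      fun h => rightPerp_op (e ▸ rightPerp_of_op h)⟩

end Opp

section PCT

variable {C : B → Prop}

lemma PreClusterTilting.rightPerp_of_mem (hC : PreClusterTilting C) {X : B} (hX : C X) :
    rightPerp C X := fun _ _ f g hT h => hC.rigid f g hX hT h

lemma PreClusterTilting.leftPerp_of_mem (hC : PreClusterTilting C) {X : B} (hX : C X) :
    leftPerp C X := fun _ _ f g hT h => hC.rigid f g hT hX h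

lemma PreClusterTilting.left_iff (hC : PreClusterTilting C) {X : B} :
    rightPerp C X ↔ leftPerp C X := by rw [hC.perp_eq]

/-- The cokernel of a monic left approximation is left perpendicular to `C`. -/
lemma PreClusterTilting.coker_leftPerp (hC : PreClusterTilting C) {X C₀ X' : B} {i : X ⟶ C₀}
    {π : C₀ ⟶ X'} (h₀ : C C₀) (hi : IsLeftApprox C i) (h : IsSES i π) : leftPerp C X' := by
  intro T E f g hT hfg
  obtain ⟨l, hl⟩ := hfg.liftC (hC.rightPerp_of_mem hT) h₀ π
  obtain ⟨m, hm⟩ := hfg.lift (i ≫ l) (by rw [Category.assoc, hl, h.w])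
  obtain ⟨n, hn⟩ := hi hT m
  obtain ⟨σ, hσ⟩ := h.desc (l - n ≫ f) (by
    rw [Preadditive.comp_sub, reassoc_of% hn, hm, sub_self])
  have := h.epi
  refine hfg.splits_of_section (s := σ) ?_
  rw [← cancel_epi π, reassoc_of% hσ, Preadditive.sub_comp, hl, Category.assoc, hfg.w]
  simp

lemma PreClusterTilting.injective_mem (hC : PreClusterTilting C) {I : B} [Injective I] : C I := by
  obtain ⟨C₀, f, h₀, hf, -⟩ := hC.cova I
  exact hC.summandClosed ⟨f, Injective.factorThru (𝟙 I) f, by simp⟩ h₀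

lemma PreClusterTilting.projective_mem (hC : PreClusterTilting C) {P : B} [Projective P] :
    C P := by
  obtain ⟨C₀, f, h₀, hf, -⟩ := hC.contra P
  exact hC.summandClosed ⟨Projective.factorThru (𝟙 P) f, f, by simp⟩ h₀

end PCT

/-! ### Cokernels modulo `C` and regularity of morphisms out of `D` -/

/-- Every morphism has a cokernel in `B/C`, spelled out in terms of representatives in `B`. -/
def CokMod (C : B → Prop) : Prop :=
  ∀ ⦃X Y : B⦄ (f : X ⟶ Y), ∃ (Q : B) (q : Y ⟶ Q), FactorsThru C (f ≫ q) ∧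
    (∀ ⦃W : B⦄ (h : Y ⟶ W), FactorsThru C (f ≫ h) → ∃ v : Q ⟶ W, FactorsThru C (h - q ≫ v)) ∧
    (∀ ⦃W : B⦄ (v : Q ⟶ W), FactorsThru C (q ≫ v) → FactorsThru C v)

/-- Every morphism has a kernel in `B/C`, spelled out in terms of representatives in `B`. -/
def KerMod (C : B → Prop) : Prop :=
  ∀ ⦃X Y : B⦄ (f : X ⟶ Y), ∃ (K : B) (k : K ⟶ X), FactorsThru C (k ≫ f) ∧
    (∀ ⦃W : B⦄ (h : W ⟶ X), FactorsThru C (h ≫ f) → ∃ v : W ⟶ K, FactorsThru C (h - v ≫ k)) ∧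
    (∀ ⦃W : B⦄ (v : W ⟶ K), FactorsThru C (v ≫ k) → FactorsThru C v)

lemma KerMod.op {C : B → Prop} (h : KerMod C) : CokMod (B := Bᵒᵖ) (fun X => C X.unop) := by
  intro X Y f
  obtain ⟨K, k, h1, h2, h3⟩ := h f.unop
  refine ⟨Opposite.op K, k.op, h1.op, fun W h hh => ?_, fun W v hv => (h3 v.unop hv.unop).op⟩
  obtain ⟨v, hv⟩ := h2 h.unop hh.unop
  exact ⟨v.op, hv.op⟩

lemma CokMod.op {C : B → Prop} (h : CokMod C) : KerMod (B := Bᵒᵖ) (fun X => C X.unop) := by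
  intro X Y f
  obtain ⟨K, k, h1, h2, h3⟩ := h f.unop
  refine ⟨Opposite.op K, k.op, h1.op, fun W h hh => ?_, fun W v hv => (h3 v.unop hv.unop).op⟩
  obtain ⟨v, hv⟩ := h2 h.unop hh.unop
  exact ⟨v.op, hv.op⟩

section Regular

variable {C : B → Prop}

/-- If `B/C` has cokernels, every morphism `f` out of an object of `D = C^⊥1 = ^⊥1C` is von
Neumann regular in `B/C`. The pushout `0 → Y → Z → X' → 0` of `0 → X → C₀ → X' → 0` along `f`
provides weak cokernels `X → Y → Z → X'`; as the honest cokernel of `f` is then a retract of `Z`,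
the complementary idempotent of `Z` factors through `Z → X'`, and lifting back to `C₀` gives
the quasi-inverse `r`. -/
lemma regular (hC : PreClusterTilting C) (hcok : CokMod C) {X Y : B} (hX : rightPerp C X)
    (f : X ⟶ Y) : ∃ r : Y ⟶ X, FactorsThru C (f ≫ r ≫ f - f) := by
  have hs := hC.sumClosed
  obtain ⟨C₀, i, h₀, hi, ha⟩ := hC.cova X
  have hse := isSES_cokernel i
  obtain ⟨X', π, hse⟩ : ∃ (X' : B) (π : C₀ ⟶ X'), IsSES i π := ⟨_, _, hse⟩
  have hX' : leftPerp C X' := hC.coker_leftPerp h₀ ha hse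
  obtain ⟨Z, g, j, p, hgp, e, hjp, huniv⟩ := hse.exists_pushout f
  have hgm := hgp.mono
  have wcok : ∀ ⦃W : B⦄ (h : Y ⟶ W), FactorsThru C (f ≫ h) → ∃ d : Z ⟶ W, g ≫ d = h := by
    rintro W h ⟨T, x, y, hT, hxy⟩
    obtain ⟨x', rfl⟩ := ha hT x
    obtain ⟨d, hd, -⟩ := huniv h (x' ≫ y) (by rw [← hxy, Category.assoc])
    exact ⟨d, hd⟩
  have wcok' : ∀ ⦃W : B⦄ (h : Z ⟶ W), FactorsThru C (g ≫ h) →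
      ∃ d : X' ⟶ W, FactorsThru C (h - p ≫ d) := by
    rintro W h ⟨T, x, y, hT, hxy⟩
    obtain ⟨x', rfl⟩ := hgp.extend hX' hT x
    obtain ⟨d, hd⟩ := hgp.desc (h - x' ≫ y) (by rw [Preadditive.comp_sub, ← hxy]; simp)
    exact ⟨d, T, x', y, hT, by rw [hd]; abel⟩
  have hfg : FactorsThru C (f ≫ g) := ⟨C₀, i, j, h₀, e.symm⟩
  obtain ⟨Q, q, hq, hqw, hqu⟩ := hcok f
  obtain ⟨u, hu⟩ := wcok q hq
  obtain ⟨v, hv⟩ := hqw g hfg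
  obtain ⟨h, hh⟩ := wcok' (𝟙 Z - u ≫ v) (hv.congr (by
    rw [Preadditive.comp_sub, reassoc_of% hu, Category.comp_id]))
  have hvp : FactorsThru C (v ≫ p) := by
    refine hqu _ ((hv.postcomp p).neg.congr ?_)
    simp [Preadditive.sub_comp, hgp.w]
  have hpp : FactorsThru C (p - p ≫ h ≫ p) := by
    refine ((hvp.precomp u).add hs (hh.postcomp p)).congr ?_
    simp only [Preadditive.sub_comp, Category.assoc, Category.id_comp]
    abel
  obtain ⟨T, x, y, hT, hxy⟩ := hpp
  obtain ⟨y', hy'⟩ := hse.liftC hX hT y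
  obtain ⟨r, hr⟩ := hse.lift (g ≫ x ≫ y') (by
    simp [hy', hxy, Preadditive.comp_sub, reassoc_of% hgp.w, hgp.w])
  obtain ⟨K, hK⟩ := hse.liftC hX h₀ (π ≫ h ≫ p)
  obtain ⟨κ, hκ⟩ := hse.lift (i ≫ K) (by simp [hK, reassoc_of% hse.w])
  obtain ⟨b, hb⟩ := hse.lift (j ≫ x ≫ y' - 𝟙 C₀ + K) (by
    simp [Preadditive.add_comp, Preadditive.sub_comp, hK, hy', hxy, Preadditive.comp_sub,
      reassoc_of% hjp, hjp])
  have him := hse.mono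
  have hfr : f ≫ r = 𝟙 X - κ + i ≫ b := by
    rw [← cancel_mono i]
    have h1 : j ≫ x ≫ y' = b ≫ i + 𝟙 C₀ - K := by rw [hb]; abel
    simp only [Category.assoc, hr, reassoc_of% e, h1, Preadditive.add_comp, Preadditive.sub_comp,
      Preadditive.comp_add, Preadditive.comp_sub, hκ, Category.id_comp, Category.comp_id]
    abel
  obtain ⟨m, hm⟩ := hgp.lift (K ≫ j - π ≫ h) (by
    simp [Preadditive.sub_comp, hjp, hK])
  have hκf : κ ≫ f = i ≫ m := by
    rw [← cancel_mono g]
    simp only [Category.assoc, hm, e, reassoc_of% hκ, Preadditive.comp_sub]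
    simp [reassoc_of% hse.w]
  refine ⟨r, C₀, i, b ≫ f - m, h₀, ?_⟩
  rw [← Category.assoc f, hfr]
  simp only [Preadditive.add_comp, Preadditive.sub_comp, hκf, Preadditive.comp_sub,
    Category.id_comp, Category.assoc]
  abel

/-- Let `0 → X → C₀ → X' → 0` be exact with `X, X' ∈ D`. Up to endomorphisms that
factor through `X` or `X'`, the identity of `C₀` factors through an injective object. -/
lemma exists_thru_injective [EnoughInjectives B] (hC : PreClusterTilting C) (hcok : CokMod C)
    {X C₀ X' : B} {i : X ⟶ C₀} {π : C₀ ⟶ X'} (h : IsSES i π) (hX : rightPerp C X)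
    (hX' : rightPerp C X') : ∃ (e : C₀ ⟶ C₀) (t : X' ⟶ C₀) (b : C₀ ⟶ X),
      FactorsThru Injective e ∧ e = 𝟙 C₀ + π ≫ t + b ≫ i := by
  have him := h.mono
  obtain ⟨I, α, hI, hα⟩ : ∃ (I : B) (α : X ⟶ I), Injective I ∧ Mono α :=
    ⟨_, Injective.ι X, inferInstance, inferInstance⟩
  obtain ⟨S, β, hse⟩ : ∃ (S : B) (β : I ⟶ S), IsSES α β := ⟨_, _, isSES_cokernel α⟩
  have hIC : C I := hC.injective_mem
  have hα' : i ≫ Injective.factorThru α i = α := by simp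
  generalize Injective.factorThru α i = α' at hα'
  obtain ⟨w, hw⟩ := h.desc (α' ≫ β) (by rw [reassoc_of% hα', hse.w])
  obtain ⟨r, T, x, y, hT, hxy⟩ := regular hC hcok hX' w
  obtain ⟨y', hy'⟩ := hse.liftC hX hT y
  obtain ⟨t, ht, -⟩ := h.pullback_lift hse hα' hw.symm (x ≫ y') (w ≫ r - 𝟙 X') (by
    rw [Category.assoc, hy', hxy, Preadditive.sub_comp]; simp)
  obtain ⟨ε, hε⟩ := h.liftC hX hIC (β ≫ r)
  obtain ⟨b, hb⟩ := h.lift (α' ≫ ε - 𝟙 C₀ - π ≫ t) (by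
    simp only [Preadditive.sub_comp, Category.assoc, hε, ht, Preadditive.comp_sub,
      ← reassoc_of% hw, Category.id_comp, Category.comp_id]
    abel)
  exact ⟨α' ≫ ε, t, b, ⟨I, α', ε, hI, rfl⟩, by rw [hb]; abel⟩

/-- The dual of `exists_thru_injective`. -/
lemma exists_thru_projective [EnoughProjectives B] (hC : PreClusterTilting C) (hker : KerMod C)
    {X C₀ X' : B} {i : X ⟶ C₀} {π : C₀ ⟶ X'} (h : IsSES i π) (hX : leftPerp C X)
    (hX' : leftPerp C X') : ∃ (e : C₀ ⟶ C₀) (t : X' ⟶ C₀) (b : C₀ ⟶ X),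
      FactorsThru Projective e ∧ e = 𝟙 C₀ + π ≫ t + b ≫ i := by
  obtain ⟨e, t, b, he, h⟩ := exists_thru_injective hC.op hker.op (C₀ := Opposite.op C₀) h.op
    (rightPerp_op hX') (rightPerp_op hX)
  obtain ⟨J, x, y, hJ, hxy⟩ := he
  refine ⟨e.unop, b.unop, t.unop, ⟨J.unop, y.unop, x.unop, inferInstance, ?_⟩, ?_⟩
  · rw [← unop_comp, hxy]
  · rw [h]
    simp only [unop_add, unop_comp, Quiver.Hom.unop_op, unop_id]
    abel

end Regular

/-! ### Objects with local endomorphism ring -/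

section Local

lemma isIso_of_isUnit {X : B} {a : X ⟶ X} (h : IsUnit (M := End X) a) : IsIso a :=
  (isUnit_iff_isIso _).1 h

lemma isIso_or_of_add {X : B} [hX : IsLocalRing (End X)] {a b : X ⟶ X} (h : a + b = 𝟙 X) :
    IsIso a ∨ IsIso b :=
  (IsLocalRing.isUnit_or_isUnit_of_add_one (R := End X) (a := a) (b := b) h).imp
    isIso_of_isUnit isIso_of_isUnit

lemma isIso_or_of_isIso_add {X : B} [hX : IsLocalRing (End X)] {a b : X ⟶ X}
    (h : IsIso (a + b)) : IsIso a ∨ IsIso b := by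
  have h1 : a ≫ inv (a + b) + b ≫ inv (a + b) = 𝟙 X := by
    rw [← Preadditive.add_comp, IsIso.hom_inv_id]
  rcases isIso_or_of_add h1 with h2 | h2
  · exact Or.inl (IsIso.of_isIso_comp_right a (inv (a + b)))
  · exact Or.inr (IsIso.of_isIso_comp_right b (inv (a + b)))

lemma id_ne_zero_of_local {X : B} [hX : IsLocalRing (End X)] : 𝟙 X ≠ 0 :=
  one_ne_zero (α := End X)

lemma not_isIso_zero {X : B} [hX : IsLocalRing (End X)] : ¬ IsIso (0 : X ⟶ X) := fun h =>
  id_ne_zero_of_local (X := X) (by rw [← IsIso.hom_inv_id (0 : X ⟶ X), zero_comp])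

lemma exists_isIso_of_sum {X : B} [hX : IsLocalRing (End X)] {ι : Type*} (s : Finset ι)
    (a : ι → (X ⟶ X)) (h : IsIso (∑ k ∈ s, a k)) : ∃ k ∈ s, IsIso (a k) := by
  classical
  induction s using Finset.induction_on with
  | empty => exact absurd (by simpa using h) (not_isIso_zero (X := X))
  | insert k s hk ih =>
    rw [Finset.sum_insert hk] at h
    rcases isIso_or_of_isIso_add h with h | h
    · exact ⟨k, by simp, h⟩
    · obtain ⟨l, hl, h⟩ := ih h
      exact ⟨l, by simp [hl], h⟩

lemma isSummand_of_isIso {X Y : B} {s : X ⟶ Y} {r : Y ⟶ X} (h : IsIso (s ≫ r)) : IsSummand X Y :=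
  ⟨s, r ≫ inv (s ≫ r), by rw [← Category.assoc, IsIso.hom_inv_id]⟩

lemma IsSummand.trans {X Y Z : B} (h : IsSummand X Y) (h' : IsSummand Y Z) : IsSummand X Z := by
  obtain ⟨s, r, h⟩ := h
  obtain ⟨s', r', h'⟩ := h'
  exact ⟨s ≫ s', r' ≫ r, by rw [Category.assoc, reassoc_of% h', h]⟩

lemma IsSummand.of_iso {X Y : B} (e : X ≅ Y) : IsSummand X Y := ⟨e.hom, e.inv, by simp⟩

/-- A nonzero summand of an object with local endomorphism ring is the whole object. -/
lemma IsSummand.symm_of_local {T X : B} [hT : IsLocalRing (End T)] [hX : IsLocalRing (End X)]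
    (h : IsSummand T X) : IsSummand X T := by
  obtain ⟨s, r, h⟩ := h
  rcases isIso_or_of_add (X := X) (a := r ≫ s) (b := 𝟙 X - r ≫ s) (by abel) with h' | h'
  · exact isSummand_of_isIso h'
  · exfalso
    have h0 : s ≫ (𝟙 X - r ≫ s) = 0 := by simp [Preadditive.comp_sub, reassoc_of% h]
    have hs : s = 0 := by rwa [← cancel_mono (𝟙 X - r ≫ s), zero_comp]
    exact id_ne_zero_of_local (X := T) (by rw [← h, hs, zero_comp])

variable {C : B → Prop}

lemma splitMono_or_factorsThru (hC : PreClusterTilting C) (hcok : CokMod C) {X Y : B}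
    [hloc : IsLocalRing (End X)] (hX : rightPerp C X) (f : X ⟶ Y) :
    (∃ r : Y ⟶ X, f ≫ r = 𝟙 X) ∨ FactorsThru C f := by
  obtain ⟨r, hr⟩ := regular hC hcok hX f
  rcases isIso_or_of_add (X := X) (a := f ≫ r) (b := 𝟙 X - f ≫ r) (by abel) with h | h
  · exact Or.inl ⟨r ≫ inv (f ≫ r), by rw [← Category.assoc, IsIso.hom_inv_id]⟩
  · right
    have h1 : FactorsThru C ((𝟙 X - f ≫ r) ≫ f) :=
      hr.neg.congr (by simp [Preadditive.sub_comp])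
    exact (h1.precomp (inv (𝟙 X - f ≫ r))).congr (by rw [IsIso.inv_hom_id_assoc])

end Local

/-! ### Minimal approximations -/

section Minimal

variable {C : B → Prop}

/-- A decomposition into objects with local endomorphism rings with the least possible number of
summands makes a monic left approximation minimal: an endomorphism killed by it has no invertible
diagonal component. -/
lemma exists_minimal_leftApprox (hKS : IsKrullSchmidt (B := B)) (hC : PreClusterTilting C)
    (X : B) : ∃ (n : ℕ) (T : Fin n → B) (i : X ⟶ ⨁ T), (∀ a, IsLocalRing (End (T a))) ∧
      C (⨁ T) ∧ Mono i ∧ IsLeftApprox C i ∧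
      ∀ y : (⨁ T) ⟶ ⨁ T, i ≫ y = 0 → ∀ a, ¬ IsIso (biproduct.ι T a ≫ y ≫ biproduct.π T a) := by
  classical
  have hex : ∃ n : ℕ, ∃ (T : Fin n → B) (i : X ⟶ ⨁ T), (∀ a, IsLocalRing (End (T a))) ∧
      C (⨁ T) ∧ Mono i ∧ IsLeftApprox C i := by
    obtain ⟨C₀, i, h₀, hi, ha⟩ := hC.cova X
    obtain ⟨n, T, ⟨e⟩, hT⟩ := hKS C₀
    refine ⟨n, T, i ≫ e.hom, hT, hC.summandClosed.iso e h₀, inferInstance, fun C' hC' g => ?_⟩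
    obtain ⟨h, hh⟩ := ha hC' g
    exact ⟨e.inv ≫ h, by simpa using hh⟩
  obtain ⟨n, hn, hmin⟩ : ∃ n : ℕ, (∃ (T : Fin n → B) (i : X ⟶ ⨁ T),
      (∀ a, IsLocalRing (End (T a))) ∧ C (⨁ T) ∧ Mono i ∧ IsLeftApprox C i) ∧
      ∀ m < n, ¬ (∃ (T : Fin m → B) (i : X ⟶ ⨁ T),
        (∀ a, IsLocalRing (End (T a))) ∧ C (⨁ T) ∧ Mono i ∧ IsLeftApprox C i) :=
    ⟨Nat.find hex, Nat.find_spec hex, fun m hm => Nat.find_min hex hm⟩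
  obtain ⟨T, i, hT, h₀, hi, ha⟩ := hn
  refine ⟨n, T, i, hT, h₀, hi, ha, fun y hy a hiso => ?_⟩
  obtain _ | m := n
  · exact a.elim0
  refine hmin m (Nat.lt_succ_self m) ?_
  -- `φ` fixes `i` and kills the `a`-th summand, so `i` factors through the other summands.
  let φ : (⨁ T) ⟶ ⨁ T := 𝟙 _ - y ≫ biproduct.π T a ≫
    inv (biproduct.ι T a ≫ y ≫ biproduct.π T a) ≫ biproduct.ι T a
  have hiφ : i ≫ φ = i := by simp [φ, Preadditive.comp_sub, reassoc_of% hy]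
  have haφ : biproduct.ι T a ≫ φ = 0 := by
    have := IsIso.hom_inv_id_assoc (biproduct.ι T a ≫ y ≫ biproduct.π T a) (biproduct.ι T a)
    simp only [Category.assoc] at this
    simp only [φ, Preadditive.comp_sub, Category.comp_id, this, sub_self]
  let T' : Fin m → B := fun c => T (a.succAbove c)
  let i' : X ⟶ ⨁ T' := i ≫ biproduct.lift (fun c => biproduct.π T (a.succAbove c))
  let s : (⨁ T') ⟶ ⨁ T := biproduct.desc (fun c => biproduct.ι T (a.succAbove c) ≫ φ)
  have hs : i' ≫ s = i := by
    have h1 : φ = ∑ c, biproduct.π T c ≫ biproduct.ι T c ≫ φ := by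
      conv_lhs => rw [← Category.id_comp φ, ← biproduct.total, Preadditive.sum_comp]
      simp only [Category.assoc]
    rw [Fin.sum_univ_succAbove _ a, haφ, comp_zero, zero_add] at h1
    conv_rhs => rw [← hiφ, h1]
    simp only [i', s, Category.assoc, biproduct.lift_desc]
  refine ⟨T', i', fun c => hT _, hC.summandClosed ⟨biproduct.desc
    (fun c => biproduct.ι T (a.succAbove c)), biproduct.lift
      (fun c => biproduct.π T (a.succAbove c)), ?_⟩ h₀, mono_of_mono_fac hs, fun C' hC' g => ?_⟩
  · apply biproduct.hom_ext
    intro c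
    apply biproduct.hom_ext'
    intro d
    by_cases hcd : d = c
    · subst hcd; simp [T']
    · have hne : a.succAbove d ≠ a.succAbove c := fun h => hcd (Fin.succAbove_right_injective h)
      simp [T', biproduct.ι_π_ne _ hne, biproduct.ι_π_ne T' hcd]
  · obtain ⟨h, hh⟩ := ha hC' g
    exact ⟨s ≫ h, by rw [reassoc_of% hs, hh]⟩

/-- An indecomposable object of `D` outside `C` has a left `C`-approximation by a
projective-injective object. -/
lemma exists_leftApprox_PI [EnoughProjectives B] [EnoughInjectives B]
    (hKS : IsKrullSchmidt (B := B)) (hC : PreClusterTilting C) (hcok : CokMod C)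
    (hker : KerMod C) {X : B} [hloc : IsLocalRing (End X)] (hX : rightPerp C X) (hXC : ¬ C X) :
    ∃ (J : B) (i : X ⟶ J), PI J ∧ IsLeftApprox C i := by
  obtain ⟨n, T, i, hT, h₀, hi, ha, hmin⟩ := exists_minimal_leftApprox hKS hC X
  have hse := isSES_cokernel i
  obtain ⟨X', π, hse⟩ : ∃ (X' : B) (π : (⨁ T) ⟶ X'), IsSES i π := ⟨_, _, hse⟩
  have hX' : leftPerp C X' := hC.coker_leftPerp h₀ ha hse
  have hTC : ∀ a, C (T a) := fun a =>
    hC.summandClosed ⟨biproduct.ι T a, biproduct.π T a, by simp⟩ h₀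
  have key : ∀ (e : (⨁ T) ⟶ ⨁ T) (t : X' ⟶ ⨁ T) (b : (⨁ T) ⟶ X),
      e = 𝟙 _ + π ≫ t + b ≫ i → ∀ a, IsIso (biproduct.ι T a ≫ e ≫ biproduct.π T a) := by
    intro e t b he a
    have := hT a
    have h1 : biproduct.ι T a ≫ e ≫ biproduct.π T a +
        (-(biproduct.ι T a ≫ (π ≫ t) ≫ biproduct.π T a) +
        -(biproduct.ι T a ≫ b ≫ i ≫ biproduct.π T a)) = 𝟙 (T a) := by
      rw [he]
      simp only [Preadditive.add_comp, Preadditive.comp_add, Category.assoc, Category.id_comp,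
        biproduct.ι_π_self]
      abel
    rcases isIso_or_of_add h1 with h | h
    · exact h
    exfalso
    rcases isIso_or_of_isIso_add h with h | h
    · refine hmin (-(π ≫ t)) (by simp [reassoc_of% hse.w]) a ?_
      simpa using h
    · have hsum : IsSummand (T a) X :=
        isSummand_of_isIso (s := -(biproduct.ι T a ≫ b)) (r := i ≫ biproduct.π T a)
          (by simpa using h)
      exact hXC (hC.summandClosed hsum.symm_of_local (hTC a))
  obtain ⟨e, t, b, ⟨I, x, y, hI, hxy⟩, he⟩ :=
    exists_thru_injective hC hcok hse hX (hC.left_iff.2 hX')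
  obtain ⟨e', t', b', ⟨P, x', y', hP, hxy'⟩, he'⟩ :=
    exists_thru_projective hC hker hse (hC.left_iff.1 hX) hX'
  have hinj : ∀ a, Injective (T a) := fun a => by
    obtain ⟨s, r, h⟩ := isSummand_of_isIso (s := biproduct.ι T a ≫ x)
      (r := y ≫ biproduct.π T a) (by
        have := key e t b he a
        rw [← hxy] at this
        simpa using this)
    exact Retract.injective (Y := I) ⟨s, r, h⟩
  have hproj : ∀ a, Projective (T a) := fun a => by
    obtain ⟨s, r, h⟩ := isSummand_of_isIso (s := biproduct.ι T a ≫ x')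
      (r := y' ≫ biproduct.π T a) (by
        have := key e' t' b' he' a
        rw [← hxy'] at this
        simpa using this)
    exact Retract.projective (Y := P) ⟨s, r, h⟩
  refine ⟨⨁ T, i, ⟨⟨fun {E Z} f p hp => ?_⟩, ⟨fun {E Z} f p hp => ?_⟩⟩, ha⟩
  · exact ⟨biproduct.desc fun a => Projective.factorThru (biproduct.ι T a ≫ f) p, by
      apply biproduct.hom_ext'; simp⟩
  · exact ⟨biproduct.lift fun a => Injective.factorThru (f ≫ biproduct.π T a) p, by
      apply biproduct.hom_ext; simp⟩

/-- A morphism out of an indecomposable object of `D` outside `C` is a split monomorphism or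
factors through a projective-injective object. -/
lemma splitMono_or_PI [EnoughProjectives B] [EnoughInjectives B]
    (hKS : IsKrullSchmidt (B := B)) (hC : PreClusterTilting C) (hcok : CokMod C)
    (hker : KerMod C) {X Y : B} [hloc : IsLocalRing (End X)] (hX : rightPerp C X) (hXC : ¬ C X)
    (f : X ⟶ Y) : (∃ r : Y ⟶ X, f ≫ r = 𝟙 X) ∨ FactorsThru PI f := by
  refine (splitMono_or_factorsThru hC hcok hX f).imp id ?_
  rintro ⟨T, x, y, hT, rfl⟩
  obtain ⟨J, i, hJ, hi⟩ := exists_leftApprox_PI hKS hC hcok hker hX hXC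
  obtain ⟨x', rfl⟩ := hi hT x
  exact ⟨J, i, x' ≫ y, hJ, by simp⟩

lemma isLocalRing_end_op {X : B} (h : IsLocalRing (End X)) :
    IsLocalRing (End (Opposite.op X)) := by
  have : Nontrivial (End (Opposite.op X)) :=
    ⟨⟨𝟙 _, 0, fun h0 => id_ne_zero_of_local (X := X) (Quiver.Hom.op_inj h0)⟩⟩
  refine IsLocalRing.of_is_unit_or_is_unit_of_add_one ?_
  intro a b hab
  have h1 : Quiver.Hom.unop a + Quiver.Hom.unop b = 𝟙 X := Quiver.Hom.op_inj hab
  refine (isIso_or_of_add h1).imp (fun h => ?_) (fun h => ?_)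
  · exact (isUnit_iff_isIso _).2 ((isIso_unop_iff _).1 h)
  · exact (isUnit_iff_isIso _).2 ((isIso_unop_iff _).1 h)

lemma IsKrullSchmidt.op (hKS : IsKrullSchmidt (B := B)) : IsKrullSchmidt (B := Bᵒᵖ) := by
  classical
  intro X
  obtain ⟨n, T, ⟨e⟩, hT⟩ := hKS X.unop
  refine ⟨n, fun a => Opposite.op (T a), ⟨?_⟩, fun a => isLocalRing_end_op (hT a)⟩
  refine ⟨biproduct.lift fun a => (biproduct.ι T a ≫ e.inv).op,
    biproduct.desc fun a => (e.hom ≫ biproduct.π T a).op, ?_, ?_⟩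
  · rw [biproduct.lift_desc]
    simp only [← op_comp, ← op_sum]
    apply Quiver.Hom.unop_inj
    have : ∑ a, (e.hom ≫ biproduct.π T a) ≫ biproduct.ι T a ≫ e.inv = 𝟙 _ := by
      have h := biproduct.total (f := T)
      have h2 : e.hom ≫ (∑ a, biproduct.π T a ≫ biproduct.ι T a) ≫ e.inv = 𝟙 _ := by
        rw [h]; simp
      rw [Preadditive.sum_comp, Preadditive.comp_sum] at h2
      simpa using h2
    rw [unop_sum]
    exact this
  · apply biproduct.hom_ext
    intro a
    apply biproduct.hom_ext'
    intro b
    simp only [biproduct.ι_desc_assoc, Category.assoc, biproduct.lift_π, Category.comp_id,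
      ← op_comp, Iso.hom_inv_id_assoc, Iso.inv_hom_id_assoc]
    by_cases hab : a = b
    · subst hab; simp
    · rw [biproduct.ι_π_ne _ hab, Category.id_comp, biproduct.ι_π_ne _ (Ne.symm hab)]
      rfl

/-- A morphism into an indecomposable object of `D` outside `C` is a split epimorphism or
factors through a projective-injective object. -/
lemma splitEpi_or_PI [EnoughProjectives B] [EnoughInjectives B]
    (hKS : IsKrullSchmidt (B := B)) (hC : PreClusterTilting C) (hcok : CokMod C)
    (hker : KerMod C) {X Y : B} [hloc : IsLocalRing (End X)] (hX : rightPerp C X) (hXC : ¬ C X)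
    (f : Y ⟶ X) : (∃ s : X ⟶ Y, s ≫ f = 𝟙 X) ∨ FactorsThru PI f := by
  have := isLocalRing_end_op hloc
  rcases splitMono_or_PI hKS.op hC.op hker.op hcok.op (X := Opposite.op X)
    (rightPerp_op (hC.left_iff.1 hX)) hXC f.op with ⟨r, hr⟩ | ⟨J, x, y, ⟨hJ, hJ'⟩, hxy⟩
  · exact Or.inl ⟨r.unop, Quiver.Hom.op_inj hr⟩
  · exact Or.inr ⟨J.unop, y.unop, x.unop, ⟨inferInstance, inferInstance⟩, by
      rw [← unop_comp, hxy]; rfl⟩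

end Minimal

/-! ### Connectedness -/

section Connected

variable {C : B → Prop}

lemma factorsThru_zero (h0 : ∃ Z, C Z) {X Y : B} : FactorsThru C (0 : X ⟶ Y) :=
  ⟨h0.choose, 0, 0, h0.choose_spec, by simp⟩

lemma FactorsThru.sum (hs : SumClosed C) (h0 : ∃ Z, C Z) {X Y : B} {ι : Type*} (s : Finset ι)
    (f : ι → (X ⟶ Y)) (h : ∀ a ∈ s, FactorsThru C (f a)) : FactorsThru C (∑ a ∈ s, f a) :=
  Finset.sum_induction f (FactorsThru C) (fun _ _ h h' => h.add hs h') (factorsThru_zero h0) h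

lemma sumClosed_PI : SumClosed (PI : B → Prop) := by
  rintro X Y ⟨hX, hX'⟩ ⟨hY, hY'⟩
  exact ⟨inferInstance, inferInstance⟩

open ZeroObject in
lemma exists_PI : ∃ Z : B, PI Z := ⟨0, inferInstance, inferInstance⟩

lemma PI_of_isSummand {X Y : B} (h : IsSummand X Y) (hY : PI Y) : PI X := by
  obtain ⟨s, r, h⟩ := h
  have := hY.1
  have := hY.2
  exact ⟨Retract.projective (Y := Y) ⟨s, r, h⟩, Retract.injective (Y := Y) ⟨s, r, h⟩⟩

lemma FactorsThru.of_components_right (hs : SumClosed C) (h0 : ∃ Z, C Z) {X Y : B} {n : ℕ}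
    {T : Fin n → B} (e : Y ≅ ⨁ T) (f : X ⟶ Y)
    (h : ∀ a, FactorsThru C (f ≫ e.hom ≫ biproduct.π T a)) : FactorsThru C f := by
  have h1 : f = ∑ a, (f ≫ e.hom ≫ biproduct.π T a) ≫ biproduct.ι T a ≫ e.inv := by
    have h2 : f ≫ e.hom ≫ (∑ a, biproduct.π T a ≫ biproduct.ι T a) ≫ e.inv = f := by
      rw [biproduct.total]; simp
    simp only [Preadditive.sum_comp, Preadditive.comp_sum, Category.assoc] at h2 ⊢
    exact h2.symm
  rw [h1]
  exact FactorsThru.sum hs h0 _ _ (fun a _ => (h a).postcomp _)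

lemma FactorsThru.of_components_left (hs : SumClosed C) (h0 : ∃ Z, C Z) {X Y : B} {n : ℕ}
    {T : Fin n → B} (e : X ≅ ⨁ T) (f : X ⟶ Y)
    (h : ∀ a, FactorsThru C (biproduct.ι T a ≫ e.inv ≫ f)) : FactorsThru C f := by
  have h1 : f = ∑ a, (e.hom ≫ biproduct.π T a) ≫ biproduct.ι T a ≫ e.inv ≫ f := by
    have h2 : e.hom ≫ (∑ a, biproduct.π T a ≫ biproduct.ι T a) ≫ e.inv ≫ f = f := by
      rw [biproduct.total]; simp
    simp only [Preadditive.sum_comp, Preadditive.comp_sum, Category.assoc] at h2 ⊢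
    exact h2.symm
  rw [h1]
  exact FactorsThru.sum hs h0 _ _ (fun a _ => (h a).precomp _)

lemma mem_of_factorsThru_id (hC : SummandClosed C) {X : B} (h : FactorsThru C (𝟙 X)) : C X := by
  obtain ⟨Z, s, r, hZ, h⟩ := h
  exact hC ⟨s, r, h⟩ hZ

lemma isSummand_component {W : B} [hW : IsLocalRing (End W)] {ι : Type} [Fintype ι]
    {T : ι → B} (h : IsSummand W (⨁ T)) : ∃ a, IsSummand W (T a) := by
  obtain ⟨s, r, h⟩ := h
  have h1 : IsIso (∑ a, (s ≫ biproduct.π T a) ≫ biproduct.ι T a ≫ r) := by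
    have h2 : s ≫ (∑ a, biproduct.π T a ≫ biproduct.ι T a) ≫ r = 𝟙 W := by
      rw [biproduct.total]; simpa using h
    have h3 : ∑ a, (s ≫ biproduct.π T a) ≫ biproduct.ι T a ≫ r = 𝟙 W := by
      simp only [Preadditive.sum_comp, Preadditive.comp_sum, Category.assoc] at h2 ⊢
      exact h2
    rw [h3]; infer_instance
  obtain ⟨a, -, ha⟩ := exists_isIso_of_sum _ _ h1
  exact ⟨a, isSummand_of_isIso ha⟩

lemma rightPerp_of_isSummand {X Z : B} (h : IsSummand X Z) (hZ : rightPerp C Z) :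
    rightPerp C X := by
  obtain ⟨s, r, h⟩ := h
  intro T E f g hT hfg
  obtain ⟨G, j, k, p, hjp, e, -, -⟩ := hfg.exists_pushout s
  obtain ⟨ρ, hρ⟩ := hZ j p hT hjp
  exact ⟨k ≫ ρ ≫ r, by rw [← reassoc_of% e, reassoc_of% hρ, h]⟩

/-- A local summand of the middle term of a short exact sequence, whose projection to the right
term is negligible, is a summand of the left term or of a projective-injective object. -/
lemma IsSES.isSummand_left {X Y Z W : B} {f : X ⟶ Y} {g : Y ⟶ Z} (h : IsSES f g)
    [hW : IsLocalRing (End W)] {s : W ⟶ Y} {r : Y ⟶ W} (hsr : s ≫ r = 𝟙 W)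
    (hg : FactorsThru PI (s ≫ g)) : IsSummand W X ∨ PI W := by
  obtain ⟨J, x, y, hJ, hxy⟩ := hg
  have := hJ.1
  have := h.epi
  obtain ⟨l, hl⟩ := h.lift (s - x ≫ Projective.factorThru y g) (by
    simp [Preadditive.sub_comp, hxy])
  have h1 : l ≫ f ≫ r + x ≫ Projective.factorThru y g ≫ r = 𝟙 W := by
    rw [reassoc_of% hl, ← hsr, Preadditive.sub_comp]; simp
  rcases isIso_or_of_add h1 with h | h
  · exact Or.inl (isSummand_of_isIso h)
  · exact Or.inr (PI_of_isSummand (isSummand_of_isIso h) hJ)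

/-- Splitting the summands of a finite direct sum into two groups. -/
lemma exists_iso_biprod {n : ℕ} (T : Fin n → B) (p : Fin n → Prop) :
    Nonempty ((⨁ T) ≅ (⨁ fun a : {a // p a} => T a) ⊞ (⨁ fun a : {a // ¬ p a} => T a)) := by
  classical
  refine ⟨⟨biprod.lift (biproduct.lift fun a => biproduct.π T a)
    (biproduct.lift fun a => biproduct.π T a), biprod.desc (biproduct.desc fun a => biproduct.ι T a)
    (biproduct.desc fun a => biproduct.ι T a), ?_, ?_⟩⟩
  · rw [biprod.lift_desc, biproduct.lift_desc, biproduct.lift_desc, ← biproduct.total]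
    exact Fintype.sum_subtype_add_sum_subtype p (fun a => biproduct.π T a ≫ biproduct.ι T a)
  · have hne : ∀ {q : Fin n → Prop} (a b : {a // q a}), a ≠ b → (a : Fin n) ≠ b :=
      fun a b h h' => h (Subtype.ext h')
    apply biprod.hom_ext' <;> apply biprod.hom_ext <;> apply biproduct.hom_ext' <;> intro a <;>
      apply biproduct.hom_ext <;> intro b
    · by_cases hab : a = b
      · subst hab; simp
      · simp [biproduct.ι_π_ne _ (hne a b hab), biproduct.ι_π_ne _ hab]
    · simp [biproduct.ι_π_ne T (fun h : (a : Fin n) = b => b.2 (h ▸ a.2))]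
    · simp [biproduct.ι_π_ne T (fun h : (a : Fin n) = b => a.2 (h ▸ b.2))]
    · by_cases hab : a = b
      · subst hab; simp
      · simp [biproduct.ι_π_ne _ (hne a b hab), biproduct.ι_π_ne _ hab]

/-- If `B/C` has kernels and cokernels and `B/(P∩I)` is connected, then `D = C`: otherwise the
objects with no indecomposable summand in `D \ C`, and those whose indecomposable summands are in
`D \ C` or projective-injective, would disconnect `B/(P∩I)`. -/
lemma mem_of_rightPerp [EnoughProjectives B] [EnoughInjectives B]
    (hKS : IsKrullSchmidt (B := B)) (hconn : ConnectedModPI (B := B))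
    (hC : PreClusterTilting C) (hPIC : ∀ X : B, PI X → C X) (hne : ∃ X : B, C X ∧ ¬ PI X)
    (hcok : CokMod C) (hker : KerMod C) {X : B} (hX : rightPerp C X) : C X := by
  classical
  have hsc := hC.summandClosed
  by_contra hXC
  -- an indecomposable object of `D` outside `C`
  obtain ⟨X₀, hX₀, hDX₀, hCX₀⟩ : ∃ X₀ : B, IsLocalRing (End X₀) ∧ rightPerp C X₀ ∧ ¬ C X₀ := by
    by_contra hcon
    push Not at hcon
    obtain ⟨n, T, ⟨e⟩, hT⟩ := hKS X
    refine hXC (mem_of_factorsThru_id hsc (FactorsThru.of_components_right hC.sumClosed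
      (hne.imp fun _ h => h.1) e _ fun a => ?_))
    have hsum : IsSummand (T a) X := ⟨biproduct.ι T a ≫ e.inv, e.hom ≫ biproduct.π T a, by simp⟩
    exact ⟨T a, _, 𝟙 _, hcon _ (hT a) (rightPerp_of_isSummand hsum hX), Category.comp_id _⟩
  -- summands of an indecomposable object of `D \ C`
  have hsub : ∀ {W V : B}, IsLocalRing (End W) → IsLocalRing (End V) → IsSummand W V →
      (rightPerp C V ∧ ¬ C V) → rightPerp C W ∧ ¬ C W := fun hW hV h hp =>
    ⟨rightPerp_of_isSummand h hp.1, fun hc => hp.2 (hsc h.symm_of_local hc)⟩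
  refine hconn ⟨fun Y => ∀ W, IsLocalRing (End W) → IsSummand W Y → ¬ (rightPerp C W ∧ ¬ C W),
    fun Y => ∀ W, IsLocalRing (End W) → IsSummand W Y → PI W ∨ (rightPerp C W ∧ ¬ C W),
    fun Y hY W _ hWY h => h.2 (hPIC _ (PI_of_isSummand hWY hY)),
    fun Y hY W _ hWY => Or.inl (PI_of_isSummand hWY hY),
    fun X Y e h W hW hWY => h W hW (hWY.trans (.of_iso e.symm)),
    fun X Y e h W hW hWY => h W hW (hWY.trans (.of_iso e.symm)),
    fun X Y hXY h W hW hWY => h W hW (hWY.trans hXY),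
    fun X Y hXY h W hW hWY => h W hW (hWY.trans hXY), ?_, ?_, ?_, ?_, ?_, ?_, ?_⟩
  · intro X Y Z f g h hX hZ W hW ⟨s, r, hsr⟩ hp
    rcases splitMono_or_PI hKS hC hcok hker hp.1 hp.2 (s ≫ g) with ⟨t, ht⟩ | hPI
    · exact hZ W hW ⟨s ≫ g, t, ht⟩ hp
    · rcases h.isSummand_left hsr hPI with h | h
      · exact hX W hW h hp
      · exact hp.2 (hPIC _ h)
  · intro X Y Z f g h hX hZ W hW ⟨s, r, hsr⟩
    by_cases hp : rightPerp C W ∧ ¬ C W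
    · exact Or.inr hp
    have hPI : FactorsThru PI (s ≫ g) := by
      obtain ⟨n, T, ⟨e⟩, hT⟩ := hKS Z
      refine FactorsThru.of_components_right sumClosed_PI exists_PI e _ fun a => ?_
      have hsum : IsSummand (T a) Z :=
        ⟨biproduct.ι T a ≫ e.inv, e.hom ≫ biproduct.π T a, by simp⟩
      rcases hZ _ (hT a) hsum with h | h
      · exact ⟨T a, _, 𝟙 _, h, Category.comp_id _⟩
      · have := hT a
        rcases splitEpi_or_PI hKS hC hcok hker h.1 h.2
          ((s ≫ g) ≫ e.hom ≫ biproduct.π T a) with ⟨t, ht⟩ | hPI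
        · exact absurd (hsub hW (hT a) (IsSummand.symm_of_local ⟨t, _, ht⟩) h) hp
        · exact hPI
    rcases h.isSummand_left hsr hPI with h | h
    · exact hX W hW h
    · exact Or.inl h
  · obtain ⟨Y, hY, hY'⟩ := hne
    exact ⟨Y, fun W _ hWY h => h.2 (hsc hWY hY), hY'⟩
  · exact ⟨X₀, fun W hW h => Or.inr (hsub hW hX₀ h ⟨hDX₀, hCX₀⟩), fun h => hCX₀ (hPIC _ h)⟩
  · intro Y
    obtain ⟨n, T, ⟨e⟩, hT⟩ := hKS Y
    obtain ⟨e'⟩ := exists_iso_biprod T (fun a => ¬ (rightPerp C (T a) ∧ ¬ C (T a)))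
    refine ⟨_, _, ?_, ?_, ⟨e ≪≫ e'⟩⟩
    · intro W hW h hp
      obtain ⟨a, ha⟩ := isSummand_component h
      have := hT a
      exact a.2 (hsub (hT a) hW ha.symm_of_local hp)
    · intro W hW h
      obtain ⟨a, ha⟩ := isSummand_component h
      exact Or.inr (hsub hW (hT a) ha (not_not.1 a.2))
  · intro X Y hX hY f
    obtain ⟨n, T, ⟨e⟩, hT⟩ := hKS Y
    refine FactorsThru.of_components_right sumClosed_PI exists_PI e _ fun a => ?_
    rcases hY _ (hT a) ⟨biproduct.ι T a ≫ e.inv, e.hom ≫ biproduct.π T a, by simp⟩ with h | h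
    · exact ⟨T a, _, 𝟙 _, h, Category.comp_id _⟩
    · have := hT a
      rcases splitEpi_or_PI hKS hC hcok hker h.1 h.2
        (f ≫ e.hom ≫ biproduct.π T a) with ⟨t, ht⟩ | hPI
      · exact absurd h (hX _ (hT a) ⟨t, _, ht⟩)
      · exact hPI
  · intro X Y hX hY f
    obtain ⟨n, T, ⟨e⟩, hT⟩ := hKS X
    refine FactorsThru.of_components_left sumClosed_PI exists_PI e _ fun a => ?_
    rcases hX _ (hT a) ⟨biproduct.ι T a ≫ e.inv, e.hom ≫ biproduct.π T a, by simp⟩ with h | h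
    · exact ⟨T a, 𝟙 _, _, h, Category.id_comp _⟩
    · have := hT a
      rcases splitMono_or_PI hKS hC hcok hker h.1 h.2
        (biproduct.ι T a ≫ e.inv ≫ f) with ⟨t, ht⟩ | hPI
      · exact absurd h (hY _ (hT a) ⟨_, t, ht⟩)
      · exact hPI

end Connected

/-! ### Cokernels and kernels modulo a cluster tilting subcategory -/

section ClusterTilting

variable {C : B → Prop}

/-- If `C` is cluster tilting, every morphism `f : X ⟶ Y` has a cokernel `q` modulo `C`, and when
`f` is monic modulo `C`, it is in turn a kernel of `q` modulo `C`. The cokernel is the pushout of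
`f` along a monic left approximation `i : X ⟶ C₀`: since `coker i` is in `C`, it is not merely a
weak cokernel. For the second claim, a morphism `y : T ⟶ Z` from an object of `C` is lifted to
`Y ⊞ C₀`: it lifts on a projective object covering `T`, and the obstruction on the syzygy is
a morphism `ω` into `X` with `ω ≫ f` negligible, hence is itself negligible. -/
lemma exists_cok [EnoughProjectives B] (hC : PreClusterTilting C)
    (hD : ∀ X : B, leftPerp C X → C X) {X Y : B} (f : X ⟶ Y) :
    ∃ (Q : B) (q : Y ⟶ Q), FactorsThru C (f ≫ q) ∧
      (∀ ⦃W : B⦄ (h : Y ⟶ W), FactorsThru C (f ≫ h) → ∃ v : Q ⟶ W, FactorsThru C (h - q ≫ v)) ∧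
      (∀ ⦃W : B⦄ (v : Q ⟶ W), FactorsThru C (q ≫ v) → FactorsThru C v) ∧
      ((∀ ⦃W : B⦄ (t : W ⟶ X), FactorsThru C (t ≫ f) → FactorsThru C t) →
        ∀ ⦃W : B⦄ (k : W ⟶ Y), FactorsThru C (k ≫ q) →
          ∃ t : W ⟶ X, FactorsThru C (k - t ≫ f)) := by
  have hs := hC.sumClosed
  obtain ⟨C₀, i, h₀, hi, ha⟩ := hC.cova X
  obtain ⟨X', π, hse⟩ : ∃ (X' : B) (π : C₀ ⟶ X'), IsSES i π := ⟨_, _, isSES_cokernel i⟩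
  have hX' : leftPerp C X' := hC.coker_leftPerp h₀ ha hse
  obtain ⟨Z, g, j, p, hgp, e, hjp, huniv⟩ := hse.exists_pushout f
  have hgm := hgp.mono
  have hπ := hse.epi
  refine ⟨Z, g, ⟨C₀, i, j, h₀, e.symm⟩, ?_, ?_, ?_⟩
  · rintro W h ⟨T, x, y, hT, hxy⟩
    obtain ⟨x', rfl⟩ := ha hT x
    obtain ⟨d, hd, -⟩ := huniv h (x' ≫ y) (by rw [← hxy, Category.assoc])
    exact ⟨d, T, 0, 0, hT, by rw [hd]; simp⟩
  · rintro W v ⟨T, x, y, hT, hxy⟩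
    obtain ⟨x', rfl⟩ := hgp.extend hX' hT x
    obtain ⟨d, hd⟩ := hgp.desc (v - x' ≫ y) (by rw [Preadditive.comp_sub, ← hxy]; simp)
    refine FactorsThru.congr (FactorsThru.add hs ⟨X', p, d, hD _ hX', hd⟩
      ⟨T, x', y, hT, rfl⟩) (by abel)
  · intro hf
    -- the pushout square is also a pullback
    have hpb : ∀ ⦃W : B⦄ (k : W ⟶ Y) (c : W ⟶ C₀), k ≫ g = c ≫ j →
        ∃ t : W ⟶ X, t ≫ f = k ∧ t ≫ i = c := by
      intro W k c hkc
      obtain ⟨t, ht⟩ := hse.lift c (by rw [← hjp, ← reassoc_of% hkc, hgp.w, comp_zero])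
      refine ⟨t, ?_, ht⟩
      rw [← cancel_mono g, Category.assoc, e, reassoc_of% ht, hkc]
    rintro W k ⟨T, x, y, hT, hxy⟩
    have hΩ := isSES_kernel (Projective.π T)
    obtain ⟨Ω, ι, hΩ⟩ : ∃ (Ω : B) (ι : Ω ⟶ Projective.over T), IsSES ι (Projective.π T) :=
      ⟨_, _, hΩ⟩
    set ε := Projective.π T
    have hPc : C (Projective.over T) := hC.projective_mem
    obtain ⟨c, hc⟩ : ∃ c : Projective.over T ⟶ C₀, c ≫ π = ε ≫ y ≫ p :=
      ⟨Projective.factorThru _ π, Projective.factorThru_comp _ _⟩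
    obtain ⟨a, hag⟩ := hgp.lift (ε ≫ y - c ≫ j) (by
      simp [Preadditive.sub_comp, hjp, hc])
    obtain ⟨ω, hω, hω'⟩ := hpb (ι ≫ a) (-(ι ≫ c)) (by
      simp [hag, Preadditive.comp_sub, reassoc_of% hΩ.w])
    obtain ⟨T', u, v, hT', huv⟩ := hf ω ⟨_, ι, a, hPc, hω.symm⟩
    obtain ⟨u', rfl⟩ := hΩ.extend (hC.leftPerp_of_mem hT) hT' u
    obtain ⟨a', ha'⟩ := hΩ.desc (a - (u' ≫ v) ≫ f) (by
      rw [Preadditive.comp_sub, ← hω, ← huv]; simp)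
    obtain ⟨c', hc'⟩ := hΩ.desc (c + (u' ≫ v) ≫ i) (by
      rw [← neg_eq_iff_eq_neg] at hω'
      rw [Preadditive.comp_add, ← hω', ← huv]; simp)
    have hy : a' ≫ g + c' ≫ j = y := by
      have := hΩ.epi
      rw [← cancel_epi ε, Preadditive.comp_add, reassoc_of% ha', reassoc_of% hc']
      simp [Preadditive.sub_comp, Preadditive.add_comp, hag, e]
    obtain ⟨t, ht, -⟩ := hpb (k - x ≫ a') (x ≫ c') (by
      rw [Preadditive.sub_comp, ← hxy, ← hy]; simp)
    exact ⟨t, T, x, a', hT, by rw [ht]; abel⟩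

/-- The dual of `exists_cok`. -/
lemma exists_ker [EnoughInjectives B] (hC : PreClusterTilting C)
    (hD : ∀ X : B, rightPerp C X → C X) {X Y : B} (f : X ⟶ Y) :
    ∃ (K : B) (k : K ⟶ X), FactorsThru C (k ≫ f) ∧
      (∀ ⦃W : B⦄ (h : W ⟶ X), FactorsThru C (h ≫ f) → ∃ v : W ⟶ K, FactorsThru C (h - v ≫ k)) ∧
      (∀ ⦃W : B⦄ (v : W ⟶ K), FactorsThru C (v ≫ k) → FactorsThru C v) ∧
      ((∀ ⦃W : B⦄ (t : Y ⟶ W), FactorsThru C (f ≫ t) → FactorsThru C t) →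
        ∀ ⦃W : B⦄ (h : X ⟶ W), FactorsThru C (k ≫ h) →
          ∃ t : Y ⟶ W, FactorsThru C (h - f ≫ t)) := by
  obtain ⟨Q, q, h1, h2, h3, h4⟩ := exists_cok (B := Bᵒᵖ) hC.op
    (fun X hX => hD X.unop (rightPerp_of_op hX)) f.op
  refine ⟨Q.unop, q.unop, h1.unop, fun W h hh => ?_, fun W v hv => (h3 v.op hv.op).unop,
    fun hf W h hh => ?_⟩
  · obtain ⟨v, hv⟩ := h2 h.op hh.op
    exact ⟨v.unop, hv.unop⟩
  · obtain ⟨t, ht⟩ := h4 (fun W t ht => (hf t.unop ht.unop).op) h.op hh.op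
    exact ⟨t.unop, ht.unop⟩

end ClusterTilting

/-! ### The quotient category -/

section Quot

variable {C : B → Prop}

lemma congruence_quotRel (hs : SumClosed C) (h0 : ∃ Z, C Z) : Congruence (quotRel C) where
  equivalence := ⟨fun f => (factorsThru_zero h0).congr (sub_self f).symm,
    fun h => h.neg.congr (neg_sub _ _),
    fun h h' => (h.add hs h').congr (sub_add_sub_cancel _ _ _)⟩
  comp_left f _ _ h := (h.precomp f).congr (Preadditive.comp_sub _ _ _)
  comp_right g h := (h.postcomp g).congr (Preadditive.sub_comp _ _ _)

/-- The quotient functor `B ⥤ B/C`. -/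
abbrev quotF (C : B → Prop) : B ⥤ QuotCat C := Quotient.functor (quotRel C)

lemma quotF_map_eq_iff (hs : SumClosed C) (h0 : ∃ Z, C Z) {X Y : B} {f g : X ⟶ Y} :
    (quotF C).map f = (quotF C).map g ↔ FactorsThru C (f - g) := by
  have := congruence_quotRel hs h0
  exact Quotient.functor_map_eq_iff _ f g

lemma exists_quotF_map {X Y : B} (φ : (quotF C).obj X ⟶ (quotF C).obj Y) :
    ∃ f : X ⟶ Y, (quotF C).map f = φ := (quotF C).map_surjective φ

open ZeroObject in
lemma isZero_quotF_zero : IsZero ((quotF C).obj (0 : B)) where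
  unique_to Y := ⟨⟨⟨(quotF C).map (Y := Y.as) 0⟩, fun φ => by
    obtain ⟨f, rfl⟩ := exists_quotF_map (Y := Y.as) φ
    exact congrArg _ ((isZero_zero B).eq_of_src _ _)⟩⟩
  unique_from Y := ⟨⟨⟨(quotF C).map (X := Y.as) 0⟩, fun φ => by
    obtain ⟨f, rfl⟩ := exists_quotF_map (X := Y.as) φ
    exact congrArg _ ((isZero_zero B).eq_of_tgt _ _)⟩⟩

/-- Whichever zero morphisms are chosen on `B/C`, those of `B` are sent to them. -/
lemma quotF_map_zero [HasZeroMorphisms (QuotCat C)] (X Y : B) :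
    (quotF C).map (0 : X ⟶ Y) = 0 := by
  rw [← zero_comp (Z := Y) (X := X) (f := (0 : _ ⟶ Y)), Functor.map_comp,
    isZero_quotF_zero.eq_of_tgt ((quotF C).map _) 0, zero_comp]

lemma quotF_map_eq_zero_iff [HasZeroMorphisms (QuotCat C)] (hs : SumClosed C) (h0 : ∃ Z, C Z)
    {X Y : B} {f : X ⟶ Y} : (quotF C).map f = 0 ↔ FactorsThru C f := by
  rw [← quotF_map_zero, quotF_map_eq_iff hs h0, sub_zero]

lemma cokMod_of_hasCokernels [HasZeroMorphisms (QuotCat C)] [HasCokernels (QuotCat C)]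
    (hs : SumClosed C) (h0 : ∃ Z, C Z) : CokMod C := by
  intro X Y f
  obtain ⟨q, hq⟩ := exists_quotF_map (Y := (cokernel ((quotF C).map f)).as)
    (cokernel.π ((quotF C).map f))
  refine ⟨_, q, ?_, fun W h hh => ?_, fun W v hv => ?_⟩
  · rw [← quotF_map_eq_zero_iff hs h0, Functor.map_comp, hq]
    exact cokernel.condition _
  · rw [← quotF_map_eq_zero_iff hs h0, Functor.map_comp] at hh
    obtain ⟨v, hv⟩ := exists_quotF_map (X := (cokernel ((quotF C).map f)).as)
      (cokernel.desc _ _ hh)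
    refine ⟨v, ?_⟩
    rw [← quotF_map_eq_iff hs h0, Functor.map_comp, hq, hv]
    exact (cokernel.π_desc _ _ hh).symm
  · rw [← quotF_map_eq_zero_iff hs h0, Functor.map_comp, hq] at hv
    rw [← quotF_map_eq_zero_iff hs h0]
    exact (cancel_epi (cokernel.π ((quotF C).map f))).1 (hv.trans comp_zero.symm)

lemma kerMod_of_hasKernels [HasZeroMorphisms (QuotCat C)] [HasKernels (QuotCat C)]
    (hs : SumClosed C) (h0 : ∃ Z, C Z) : KerMod C := by
  intro X Y f
  obtain ⟨q, hq⟩ := exists_quotF_map (X := (kernel ((quotF C).map f)).as)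
    (kernel.ι ((quotF C).map f))
  refine ⟨_, q, ?_, fun W h hh => ?_, fun W v hv => ?_⟩
  · rw [← quotF_map_eq_zero_iff hs h0, Functor.map_comp, hq]
    exact kernel.condition _
  · rw [← quotF_map_eq_zero_iff hs h0, Functor.map_comp] at hh
    obtain ⟨v, hv⟩ := exists_quotF_map (Y := (kernel ((quotF C).map f)).as)
      (kernel.lift _ _ hh)
    refine ⟨v, ?_⟩
    rw [← quotF_map_eq_iff hs h0, Functor.map_comp, hq, hv]
    exact (kernel.lift_ι _ _ hh).symm
  · rw [← quotF_map_eq_zero_iff hs h0, Functor.map_comp, hq] at hv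
    rw [← quotF_map_eq_zero_iff hs h0]
    exact (cancel_mono (kernel.ι ((quotF C).map f))).1 (hv.trans zero_comp.symm)

/-- A cokernel modulo `C` is a cokernel in `B/C`. -/
lemma isColimit_of_cok [HasZeroMorphisms (QuotCat C)] (hs : SumClosed C) (h0 : ∃ Z, C Z)
    {X Y Q : B} {f : X ⟶ Y} {q : Y ⟶ Q} (w : (quotF C).map f ≫ (quotF C).map q = 0)
    (h2 : ∀ ⦃W : B⦄ (h : Y ⟶ W), FactorsThru C (f ≫ h) → ∃ v : Q ⟶ W, FactorsThru C (h - q ≫ v))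
    (h3 : Epi ((quotF C).map q)) :
    Nonempty (IsColimit (CokernelCofork.ofπ ((quotF C).map q) w)) := by
  have key : ∀ {W : QuotCat C} (k : (quotF C).obj Y ⟶ W), (quotF C).map f ≫ k = 0 →
      ∃ l : (quotF C).obj Q ⟶ W, (quotF C).map q ≫ l = k := by
    intro W k hk
    obtain ⟨h, rfl⟩ := exists_quotF_map (Y := W.as) k
    obtain ⟨v, hv⟩ := h2 h ((quotF_map_eq_zero_iff hs h0).1 (by rw [Functor.map_comp]; exact hk))
    exact ⟨(quotF C).map v, by
      rw [← Functor.map_comp]; exact ((quotF_map_eq_iff hs h0).2 hv).symm⟩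
  exact ⟨CokernelCofork.IsColimit.ofπ _ _ (fun k hk => (key k hk).choose)
    (fun k hk => (key k hk).choose_spec) (fun k hk m hm => by
      rw [← cancel_epi ((quotF C).map q)]
      exact hm.trans (key k hk).choose_spec.symm)⟩

/-- A kernel modulo `C` is a kernel in `B/C`. -/
lemma isLimit_of_ker [HasZeroMorphisms (QuotCat C)] (hs : SumClosed C) (h0 : ∃ Z, C Z)
    {X Y K : B} {f : X ⟶ Y} {k : K ⟶ X} (w : (quotF C).map k ≫ (quotF C).map f = 0)
    (h2 : ∀ ⦃W : B⦄ (h : W ⟶ X), FactorsThru C (h ≫ f) → ∃ v : W ⟶ K, FactorsThru C (h - v ≫ k))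
    (h3 : Mono ((quotF C).map k)) :
    Nonempty (IsLimit (KernelFork.ofι ((quotF C).map k) w)) := by
  have key : ∀ {W : QuotCat C} (l : W ⟶ (quotF C).obj X), l ≫ (quotF C).map f = 0 →
      ∃ m : W ⟶ (quotF C).obj K, m ≫ (quotF C).map k = l := by
    intro W l hl
    obtain ⟨h, rfl⟩ := exists_quotF_map (X := W.as) l
    obtain ⟨v, hv⟩ := h2 h ((quotF_map_eq_zero_iff hs h0).1 (by rw [Functor.map_comp]; exact hl))
    exact ⟨(quotF C).map v, by
      rw [← Functor.map_comp]; exact ((quotF_map_eq_iff hs h0).2 hv).symm⟩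
  exact ⟨KernelFork.IsLimit.ofι _ _ (fun l hl => (key l hl).choose)
    (fun l hl => (key l hl).choose_spec) (fun l hl m hm => by
      rw [← cancel_mono ((quotF C).map k)]
      exact hm.trans (key l hl).choose_spec.symm)⟩

lemma epi_quotF_map [Preadditive (QuotCat C)] (hs : SumClosed C) (h0 : ∃ Z, C Z)
    {X Y : B} {f : X ⟶ Y}
    (h : ∀ ⦃W : B⦄ (v : Y ⟶ W), FactorsThru C (f ≫ v) → FactorsThru C v) :
    Epi ((quotF C).map f) := by
  refine Preadditive.epi_of_cancel_zero _ fun {W} φ hφ => ?_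
  obtain ⟨v, rfl⟩ := exists_quotF_map (Y := W.as) φ
  refine (quotF_map_eq_zero_iff hs h0).2 (h v ((quotF_map_eq_zero_iff hs h0).1 ?_))
  rw [Functor.map_comp]
  exact hφ

lemma mono_quotF_map [Preadditive (QuotCat C)] (hs : SumClosed C) (h0 : ∃ Z, C Z)
    {X Y : B} {f : X ⟶ Y}
    (h : ∀ ⦃W : B⦄ (v : W ⟶ X), FactorsThru C (v ≫ f) → FactorsThru C v) :
    Mono ((quotF C).map f) := by
  refine Preadditive.mono_of_cancel_zero _ fun {W} φ hφ => ?_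
  obtain ⟨v, rfl⟩ := exists_quotF_map (X := W.as) φ
  refine (quotF_map_eq_zero_iff hs h0).2 (h v ((quotF_map_eq_zero_iff hs h0).1 ?_))
  rw [Functor.map_comp]
  exact hφ

lemma of_mono_quotF_map [HasZeroMorphisms (QuotCat C)] (hs : SumClosed C) (h0 : ∃ Z, C Z)
    {X Y : B} {f : X ⟶ Y} (hf : Mono ((quotF C).map f)) ⦃W : B⦄ (v : W ⟶ X)
    (hv : FactorsThru C (v ≫ f)) : FactorsThru C v := by
  rw [← quotF_map_eq_zero_iff hs h0] at hv ⊢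
  rwa [Functor.map_comp, ← zero_comp (f := (quotF C).map f), cancel_mono] at hv

lemma of_epi_quotF_map [HasZeroMorphisms (QuotCat C)] (hs : SumClosed C) (h0 : ∃ Z, C Z)
    {X Y : B} {f : X ⟶ Y} (hf : Epi ((quotF C).map f)) ⦃W : B⦄ (v : Y ⟶ W)
    (hv : FactorsThru C (f ≫ v)) : FactorsThru C v := by
  rw [← quotF_map_eq_zero_iff hs h0] at hv ⊢
  rwa [Functor.map_comp, ← comp_zero (f := (quotF C).map f), cancel_epi] at hv

/-- The quotient of `B` by a cluster tilting subcategory is abelian. -/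
lemma isAbelian_quotCat [EnoughProjectives B] [EnoughInjectives B] (hC : PreClusterTilting C)
    (h0 : ∃ Z, C Z) (hD : ∀ X : B, leftPerp C X → C X) : IsAbelian (QuotCat C) := by
  have hs := hC.sumClosed
  have hD' : ∀ X : B, rightPerp C X → C X := fun X h => hD X (hC.left_iff.1 h)
  have := congruence_quotRel hs h0
  have hr : ∀ ⦃X Y : B⦄ (f₁ f₂ g₁ g₂ : X ⟶ Y) (_ : quotRel C f₁ f₂) (_ : quotRel C g₁ g₂),
      quotRel C (f₁ + g₁) (f₂ + g₂) := fun X Y f₁ f₂ g₁ g₂ h h' =>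
    (h.add hs h').congr (by abel)
  letI : Preadditive (QuotCat C) := Quotient.preadditive _ hr
  have : (quotF C).Additive := Quotient.functor_additive _ hr
  have : HasZeroObject (QuotCat C) := ⟨_, isZero_quotF_zero⟩
  have := preservesBinaryBiproducts_of_preservesBiproducts (quotF C)
  have : HasBinaryBiproducts (QuotCat C) := ⟨fun X Y =>
    (inferInstance : HasBinaryBiproduct ((quotF C).obj X.as) ((quotF C).obj Y.as))⟩
  have : HasFiniteProducts (QuotCat C) := hasFiniteProducts_of_has_binary_and_terminal
  have : HasCokernels (QuotCat C) := ⟨fun {X Y} φ => by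
    obtain ⟨f, rfl⟩ := exists_quotF_map (X := X.as) (Y := Y.as) φ
    obtain ⟨Q, q, h1, h2, h3, -⟩ := exists_cok hC hD f
    have w := (quotF_map_eq_zero_iff hs h0).2 h1
    rw [Functor.map_comp] at w
    exact ⟨⟨_, (isColimit_of_cok hs h0 w h2 (epi_quotF_map hs h0 h3)).some⟩⟩⟩
  have : HasKernels (QuotCat C) := ⟨fun {X Y} φ => by
    obtain ⟨f, rfl⟩ := exists_quotF_map (X := X.as) (Y := Y.as) φ
    obtain ⟨K, k, h1, h2, h3, -⟩ := exists_ker hC hD' f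
    have w := (quotF_map_eq_zero_iff hs h0).2 h1
    rw [Functor.map_comp] at w
    exact ⟨⟨_, (isLimit_of_ker hs h0 w h2 (mono_quotF_map hs h0 h3)).some⟩⟩⟩
  have : IsNormalMonoCategory (QuotCat C) := ⟨fun {X Y} φ hφ => by
    obtain ⟨f, rfl⟩ := exists_quotF_map (X := X.as) (Y := Y.as) φ
    obtain ⟨Q, q, h1, -, -, h4⟩ := exists_cok hC hD f
    have w := (quotF_map_eq_zero_iff hs h0).2 h1
    rw [Functor.map_comp] at w
    exact ⟨⟨_, (quotF C).map q, w,
      (isLimit_of_ker hs h0 w (h4 (of_mono_quotF_map hs h0 hφ)) hφ).some⟩⟩⟩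
  have : IsNormalEpiCategory (QuotCat C) := ⟨fun {X Y} φ hφ => by
    obtain ⟨f, rfl⟩ := exists_quotF_map (X := X.as) (Y := Y.as) φ
    obtain ⟨K, k, h1, -, -, h4⟩ := exists_ker hC hD' f
    have w := (quotF_map_eq_zero_iff hs h0).2 h1
    rw [Functor.map_comp] at w
    exact ⟨⟨_, (quotF C).map k, w,
      (isColimit_of_cok hs h0 w (h4 (of_epi_quotF_map hs h0 hφ)) hφ).some⟩⟩⟩
  exact ⟨{}⟩

end Quot

/-- Assume `B/(P∩I)` is connected and `C` is a pre-cluster tilting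
subcategory containing `P∩I` and an object not in `P∩I`. Then `C` is cluster tilting
(`C = C^⊥1 = ^⊥1C`) iff `B/C` is abelian. -/
theorem stmt17 [EnoughProjectives B] [EnoughInjectives B]
    (hKS : IsKrullSchmidt (B := B)) (hconn : ConnectedModPI (B := B))
    (C : B → Prop) (hCiso : IsoClosed C) (hC : PreClusterTilting C)
    (hPIC : ∀ X : B, PI X → C X) (hne : ∃ X : B, C X ∧ ¬ PI X) :
    ((∀ X : B, C X ↔ rightPerp C X) ∧ (∀ X : B, C X ↔ leftPerp C X)) ↔
      IsAbelian (QuotCat C) := by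
  have h0 : ∃ Z, C Z := hne.imp fun _ h => h.1
  constructor
  · rintro ⟨-, h⟩
    exact isAbelian_quotCat hC h0 fun X => (h X).2
  · rintro ⟨hA⟩
    have h : ∀ X : B, C X ↔ rightPerp C X := fun X => ⟨hC.rightPerp_of_mem,
      mem_of_rightPerp hKS hconn hC hPIC hne (cokMod_of_hasCokernels hC.sumClosed h0)
        (kerMod_of_hasKernels hC.sumClosed h0)⟩
    exact ⟨h, fun X => (h X).trans hC.left_iff⟩

end ClusterPaperAb
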